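/- Helton–McCullough–Vinnikov theorem over fields of characteristic ≠ 2: if F is a field with char F ≠ 2, then every polynomial p(z) ∈ F[z₁,…,zₙ] admits a symmetric determinantal representation, i.e., there exist m ∈ ℕ and symmetric matrices A₀, A₁, …, Aₙ ∈ F^{m×m} such that p(z) = det(A₀ + Σᵢ₌₁ⁿ zᵢAᵢ) as polynomials in z₁,…,zₙ. -/

import Mathlib

/-!
Higman's linearization writes every polynomial as `p = uᵀ M⁻¹ v`, where `u` and `v` are constant
vectors and `M` is a matrix of polynomials of degree at most one with `det M = 1`: sums and products
of polynomials correspond to block triangular matrices. The symmetric matrix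
`S = [0, M, v; Mᵀ, 0, u; vᵀ, uᵀ, 0]` then has determinant `± (uᵀ M⁻¹ v + vᵀ M⁻ᵀ u) = ± 2 p`, by
taking the Schur complement of its upper left corner. When `2` is invertible, rescaling `u` turns
this into `p`.
-/

namespace HMV

open MvPolynomial Matrix

section Affine

variable {σ R : Type*} [CommSemiring R]

lemma totalDegree_X_le_one (i : σ) : (X i : MvPolynomial σ R).totalDegree ≤ 1 :=
  (totalDegree_monomial_le _ _).trans (by simp)

lemma eq_C_add_sum_of_totalDegree_le_one [Fintype σ] {q : MvPolynomial σ R}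
    (hq : q.totalDegree ≤ 1) :
    q = C (coeff 0 q) + ∑ i, C (coeff (Finsupp.single i 1) q) * X i := by
  classical
  ext d
  obtain hd | hd | hd : d.degree = 0 ∨ d.degree = 1 ∨ 1 < d.degree := by lia
  · obtain rfl : d = 0 := d.degree_eq_zero_iff.mp hd
    simp [coeff_sum]
  · obtain ⟨j, rfl⟩ := (Finsupp.sum_eq_one_iff d).mp hd
    simp [coeff_sum, coeff_C, coeff_C_mul, coeff_X, Finsupp.single_left_inj,
      eq_comm (a := (0 : σ →₀ ℕ))]
  · have hd_zero : 0 ≠ d := by rintro rfl; simp at hd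
    have hd_single (i : σ) : Finsupp.single i 1 ≠ d := by rintro rfl; simp at hd
    rw [coeff_eq_zero_of_totalDegree_lt (hq.trans_lt hd)]
    simp [coeff_sum, coeff_C, coeff_C_mul, coeff_X, hd_zero, hd_single]

lemma eq_map_C_add_sum_of_totalDegree_le_one [Fintype σ] {m n : Type*}
    {M : Matrix m n (MvPolynomial σ R)} (hM : ∀ i j, (M i j).totalDegree ≤ 1) :
    M = (M.map (coeff 0)).map C +
      ∑ k, (X k : MvPolynomial σ R) • (M.map (coeff (Finsupp.single k 1))).map C := by
  ext1 i j
  simpa [Matrix.sum_apply, mul_comm] using eq_C_add_sum_of_totalDegree_le_one (hM i j)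

end Affine

section Symmetrization

variable {S : Type*} [CommRing S] {ι κ : Type*}

/-- The symmetric matrix `[0, M, v; Mᵀ, 0, u; vᵀ, uᵀ, 0]`. For invertible `M`, its determinant is
`2 uᵀ M⁻¹ v` up to a factor depending on `M` only. -/
def symmetrization (M : Matrix ι ι S) (u v : ι → S) : Matrix ((ι ⊕ ι) ⊕ Unit) ((ι ⊕ ι) ⊕ Unit) S :=
  fromBlocks (fromBlocks 0 M Mᵀ 0) (replicateCol Unit (Sum.elim v u))
    (replicateRow Unit (Sum.elim v u)) 0

lemma isSymm_symmetrization (M : Matrix ι ι S) (u v : ι → S) : (symmetrization M u v).IsSymm :=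
  .fromBlocks (.fromBlocks isSymm_zero rfl isSymm_zero) rfl isSymm_zero

lemma totalDegree_symmetrization_le {σ : Type*} {M : Matrix ι ι (MvPolynomial σ S)} {d : ℕ}
    (hM : ∀ i j, (M i j).totalDegree ≤ d) (u v : ι → S) (i j : (ι ⊕ ι) ⊕ Unit) :
    (symmetrization M (C ∘ u) (C ∘ v) i j).totalDegree ≤ d := by
  rcases i with (i | i) | i <;> rcases j with (j | j) | j <;> simp [symmetrization, hM]

variable [Fintype ι] [DecidableEq ι] [Fintype κ] [DecidableEq κ]

lemma det_fromBlocks_zero_zero (B C : Matrix ι ι S) :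
    (fromBlocks 0 B C 0).det = (-1) ^ Fintype.card ι * (B.det * C.det) := by
  have factorization : fromBlocks 0 B C 0 =
      fromBlocks 1 (-1) 0 1 * fromBlocks 1 1 1 0 * fromBlocks C 0 0 B := by
    simp [fromBlocks_multiply]
  rw [factorization, det_mul, det_mul, det_fromBlocks_zero₂₁, det_fromBlocks_one₁₁,
    det_fromBlocks_zero₂₁]
  simp [det_neg, mul_comm B.det]

lemma det_fromBlocks_mul₁₂ (A : Matrix ι ι S) (X : Matrix ι κ S) (C : Matrix κ ι S)
    (D : Matrix κ κ S) : (fromBlocks A (A * X) C D).det = A.det * (D - C * X).det := by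
  have factorization : fromBlocks A (A * X) C D =
      fromBlocks A 0 C (D - C * X) * fromBlocks 1 X 0 1 := by
    simp [fromBlocks_multiply]
  simp [factorization]

lemma det_symmetrization {M : Matrix ι ι S} {u v x y : ι → S} (hx : M *ᵥ x = v)
    (hy : Mᵀ *ᵥ y = u) :
    (symmetrization M u v).det = (-1) ^ (Fintype.card ι + 1) * M.det ^ 2 * (2 * (u ⬝ᵥ x)) := by
  have solution : replicateCol Unit (Sum.elim v u) =
      fromBlocks 0 M Mᵀ 0 * replicateCol Unit (Sum.elim y x) := by
    simp [← replicateCol_mulVec, fromBlocks_mulVec, hx, hy]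
  have pairing : Sum.elim v u ⬝ᵥ Sum.elim y x = 2 * (u ⬝ᵥ x) := by
    have : v ⬝ᵥ y = u ⬝ᵥ x := by
      rw [← hx, ← hy, mulVec_transpose, ← dotProduct_mulVec, dotProduct_comm]
    rw [sumElim_dotProduct_sumElim, this, two_mul]
  rw [symmetrization, solution, det_fromBlocks_mul₁₂, det_fromBlocks_zero_zero, det_transpose,
    det_unique (n := Unit), zero_sub, Matrix.neg_apply, replicateRow_mul_replicateCol_apply,
    pairing]
  ring

end Symmetrization

section Realization

variable {σ R : Type*} [CommRing R] {ι κ : Type*} [Fintype ι] [DecidableEq ι]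
  [Fintype κ] [DecidableEq κ]

/-- A Higman linearization `p = uᵀ M⁻¹ v` of a polynomial, with constant vectors `u` and `v` and an
affine linear pencil `M` of determinant one. The vector `M⁻¹ v` enters as a solution of
`M x = v`. -/
structure IsRealization (M : Matrix ι ι (MvPolynomial σ R)) (u v : ι → R)
    (p : MvPolynomial σ R) : Prop where
  totalDegree_le_one : ∀ i j, (M i j).totalDegree ≤ 1
  det_eq_one : M.det = 1
  exists_solution : ∃ x, M *ᵥ x = C ∘ v ∧ (C ∘ u) ⬝ᵥ x = p

namespace IsRealization

variable {M : Matrix ι ι (MvPolynomial σ R)} {N : Matrix κ κ (MvPolynomial σ R)}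
  {u v : ι → R} {s t : κ → R} {p q : MvPolynomial σ R}

lemma of_totalDegree_le_one (hq : q.totalDegree ≤ 1) :
    IsRealization !![1, -q; 0, 1] ![1, 0] ![0, 1] q where
  totalDegree_le_one i j := by fin_cases i <;> fin_cases j <;> simp [hq]
  det_eq_one := by simp
  exists_solution := ⟨![q, 1], by ext1 i; fin_cases i <;> simp, by simp [dotProduct]⟩

lemma smul (c : R) (h : IsRealization M u v p) : IsRealization M (c • u) v (C c * p) where
  totalDegree_le_one := h.totalDegree_le_one
  det_eq_one := h.det_eq_one
  exists_solution := by
    obtain ⟨x, hx, rfl⟩ := h.exists_solution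
    have hu : C ∘ (c • u) = (C c : MvPolynomial σ R) • (C ∘ u : ι → MvPolynomial σ R) := by
      ext1
      simp
    exact ⟨x, hx, by rw [hu, smul_dotProduct, smul_eq_mul]⟩

lemma add (hp : IsRealization M u v p) (hq : IsRealization N s t q) :
    IsRealization (fromBlocks M 0 0 N) (Sum.elim u s) (Sum.elim v t) (p + q) where
  totalDegree_le_one := by
    rintro (i | i) (j | j) <;> simp [hp.totalDegree_le_one, hq.totalDegree_le_one]
  det_eq_one := by simp [hp.det_eq_one, hq.det_eq_one]
  exists_solution := by
    obtain ⟨x, hx, rfl⟩ := hp.exists_solution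
    obtain ⟨y, hy, rfl⟩ := hq.exists_solution
    exact ⟨Sum.elim x y, by simp [fromBlocks_mulVec, hx, hy, Sum.comp_elim],
      by simp [Sum.comp_elim]⟩

lemma mul (hp : IsRealization M u v p) (hq : IsRealization N s t q) :
    IsRealization (fromBlocks M (-vecMulVec (C ∘ v) (C ∘ s)) 0 N) (Sum.elim u 0) (Sum.elim 0 t)
      (p * q) where
  totalDegree_le_one := by
    rintro (i | i) (j | j) <;>
      simp [hp.totalDegree_le_one, hq.totalDegree_le_one, vecMulVec_apply, ← C_mul, -map_mul]
  det_eq_one := by simp [hp.det_eq_one, hq.det_eq_one]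
  exists_solution := by
    obtain ⟨x, hx, rfl⟩ := hp.exists_solution
    obtain ⟨y, hy, rfl⟩ := hq.exists_solution
    refine ⟨Sum.elim (((C ∘ s) ⬝ᵥ y) • x) y, ?_, ?_⟩
    · simp [fromBlocks_mulVec, mulVec_smul, neg_mulVec, vecMulVec_mulVec, hx, hy, Sum.comp_elim]
    · simp [Sum.comp_elim, mul_comm]

lemma exists_of_mvPolynomial (p : MvPolynomial σ R) :
    ∃ (ι : Type) (_ : Fintype ι) (_ : DecidableEq ι) (M : Matrix ι ι (MvPolynomial σ R))
      (u v : ι → R), IsRealization M u v p := by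
  induction p using MvPolynomial.induction_on with
  | C c => exact ⟨_, _, _, _, _, _, of_totalDegree_le_one (by simp)⟩
  | add p q hp hq =>
    obtain ⟨_, _, _, _, _, _, hp⟩ := hp
    obtain ⟨_, _, _, _, _, _, hq⟩ := hq
    exact ⟨_, _, _, _, _, _, hp.add hq⟩
  | mul_X p i hp =>
    obtain ⟨_, _, _, _, _, _, hp⟩ := hp
    exact ⟨_, _, _, _, _, _, hp.mul (of_totalDegree_le_one (totalDegree_X_le_one i))⟩

lemma det_symmetrization (h : IsRealization M u v p) :
    (symmetrization M (C ∘ u) (C ∘ v)).det = C ((-1) ^ (Fintype.card ι + 1) * 2) * p := by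
  obtain ⟨x, hx, rfl⟩ := h.exists_solution
  have hy : Mᵀ *ᵥ (Mᵀ.adjugate *ᵥ (C ∘ u)) = C ∘ u := by
    rw [mulVec_mulVec, mul_adjugate, det_transpose, h.det_eq_one, one_smul, one_mulVec]
  rw [HMV.det_symmetrization hx hy, h.det_eq_one]
  simp only [C_mul, C_pow, C_neg, C_1, map_ofNat]
  ring

end IsRealization

lemma exists_isSymm_det_eq (h2 : IsUnit (2 : R)) (p : MvPolynomial σ R) :
    ∃ (ι : Type) (_ : Fintype ι) (_ : DecidableEq ι) (M : Matrix ι ι (MvPolynomial σ R)),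
      M.IsSymm ∧ (∀ i j, (M i j).totalDegree ≤ 1) ∧ M.det = p := by
  obtain ⟨ι, _, _, M, u, v, h⟩ := IsRealization.exists_of_mvPolynomial p
  obtain ⟨c, hc⟩ : ∃ c, (-1) ^ (Fintype.card ι + 1) * 2 * c = 1 :=
    ((isUnit_neg_one.pow _).mul h2).exists_right_inv
  have hcu := h.smul c
  refine ⟨_, inferInstance, inferInstance, symmetrization M (C ∘ (c • u)) (C ∘ v),
    isSymm_symmetrization _ _ _, totalDegree_symmetrization_le hcu.totalDegree_le_one _ _, ?_⟩
  rw [hcu.det_symmetrization, ← mul_assoc, ← C_mul, hc, C_1, one_mul]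

end Realization

end HMV

open MvPolynomial in
theorem hmv_theorem_general {R σ : Type*} [CommRing R] (h2 : IsUnit (2 : R)) [Fintype σ]
    (p : MvPolynomial σ R) :
    ∃ (m : ℕ) (A0 : Matrix (Fin m) (Fin m) R) (A : σ → Matrix (Fin m) (Fin m) R),
      A0.IsSymm ∧ (∀ i, (A i).IsSymm) ∧
      p = Matrix.det (A0.map C + ∑ i, (X i : MvPolynomial σ R) • (A i).map C) := by
  obtain ⟨ι, _, _, M, hM_symm, hM_degree, rfl⟩ := HMV.exists_isSymm_det_eq h2 p
  let e := Fintype.equivFin ι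
  let N := M.submatrix e.symm e.symm
  have hN_symm : N.IsSymm := hM_symm.submatrix _
  refine ⟨Fintype.card ι, N.map (coeff 0), fun k => N.map (coeff (Finsupp.single k 1)),
    hN_symm.map _, fun k => hN_symm.map _, ?_⟩
  rw [← HMV.eq_map_C_add_sum_of_totalDegree_le_one (M := N) fun _ _ => hM_degree _ _,
    Matrix.det_submatrix_equiv_self]

open MvPolynomial in
theorem hmv_theorem {F : Type*} [Field F] (h2 : (2 : F) ≠ 0) {n : ℕ}
    (p : MvPolynomial (Fin n) F) :
    ∃ (m : ℕ) (A0 : Matrix (Fin m) (Fin m) F) (A : Fin n → Matrix (Fin m) (Fin m) F),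
      A0.IsSymm ∧ (∀ i, (A i).IsSymm) ∧
      p = Matrix.det (A0.map C + ∑ i, (X i : MvPolynomial (Fin n) F) • (A i).map C) :=
  hmv_theorem_general h2.isUnit p
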